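/- (Corollary 1, fundamental lemma for a constant disturbance) Consider the deterministic augmented LTI system P_d: x_{k+1} = A x_k + B_d d + B u_k, y_k = C x_k + C_d d + D u_k, where d ∈ ℝ^{n_d} is a fixed nonzero constant disturbance, x_k ∈ ℝ^{n_x}, u_k ∈ ℝ^{n_u}, y_k ∈ ℝ^{n_y}, and n̄ = n_x + n_d. Let u^m_k, y^m_k be a measured input–output trajectory of P_d (with the same disturbance d) over time steps k = 0, ..., N + L + n̄ - 2, with (A, B) controllable and {u^m_k}_{k=0}^{N+L+n̄-2} persistently exciting of order L + n̄. Then for every L-long input–output trajectory (u_0, ..., u_{L-1}, y_0, ..., y_{L-1}) of P_d generated from some initial state x_0 ∈ ℝ^{n_x} with the same disturbance d, there exists g ∈ ℝ^{N+n̄} such that [H_{0,L,N+n̄}(u^m); H_{0,L,N+n̄}(y^m)] g = [u_0; ...; u_{L-1}; y_0; ...; y_{L-1}]. -/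

import Mathlib

/-!
With `ξ, c, η` the coefficients of a linear relation
`ξ · x_k + c + ∑_{m<L} η_m · u_{k+m} = 0` between the measured states, the constant `1` and the
measured inputs, the proof shows that the relation is trivial, so that the data matrix with columns
`(x_k, 1, u_k, …, u_{k+L-1})` has full row rank; a `g` that reproduces `(x_0, 1, u_0, …, u_{L-1})`
then reproduces the outputs too, because the dynamics are affine and the entries of `g` sum to one.

Shifting the relation by `j` steps and eliminating `x_{k+j}` gives
`ξ A^j x_k + c_j + ∑_{l<L+j} h_{L+j-1-l} · u_{k+l} = 0`, where `h` is the single sequence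
`η_{L-1}, …, η_0, ξB, ξAB, ξA²B, …` (`shifted_relation`). Weighting these relations with the
coefficients of the characteristic polynomial of `A` removes the state by Cayley–Hamilton, and
subtracting two consecutive instances removes the constant. What is left is a relation among
`n_x + L + 1` consecutive inputs. Since `d ≠ 0` forces `n_d ≥ 1`, persistency of excitation applies
and kills its coefficients. The characteristic polynomial is monic, so `h_t = 0` for `t < L + n_x`
follows recursively (`coeff_eq_zero`). Thus `η = 0`, and `ξ = 0` by controllability.
-/

open Matrix

/-- Block-Hankel matrix `H_{i,s,N}(w)` of a vector-valued sequence `w`: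
the `((a, v), b)` entry is `w (i + a + b) v`. -/
noncomputable def blockHankel {ι : Type*} (w : ℕ → ι → ℝ) (i s N : ℕ) :
    Matrix (Fin s × ι) (Fin N) ℝ :=
  Matrix.of fun p b => w (i + (p.1 : ℕ) + (b : ℕ)) p.2

/-- Depth-1 block-Hankel matrix `H_{i,1,N}(w)`, with rows indexed directly by
the signal components. -/
noncomputable def hankelState {ι : Type*} (w : ℕ → ι → ℝ) (i N : ℕ) :
    Matrix ι (Fin N) ℝ :=
  Matrix.of fun r b => w (i + (b : ℕ)) r

/-- Controllability matrix `[B, AB, ..., A^{n-1}B]` of the pair `(A, B)`. -/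
noncomputable def ctrbMat {n r : ℕ} (A : Matrix (Fin n) (Fin n) ℝ)
    (B : Matrix (Fin n) (Fin r) ℝ) : Matrix (Fin n) (Fin n × Fin r) ℝ :=
  Matrix.of fun i p => (A ^ (p.1 : ℕ) * B) i p.2

/-- Controllability matrix `[d₀, A_d d₀, ..., A_d^{n_d-1} d₀]` of a pair
`(A_d, d₀)` consisting of a matrix and a vector. -/
noncomputable def ctrbVec {n : ℕ} (Ad : Matrix (Fin n) (Fin n) ℝ)
    (d0 : Fin n → ℝ) : Matrix (Fin n) (Fin n) ℝ :=
  Matrix.of fun i j => ((Ad ^ (j : ℕ)) *ᵥ d0) i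

lemma vecMul_eq_zero_of_rank {m n : Type*} [Fintype m] [Fintype n]
    (M : Matrix m n ℝ) (hM : M.rank = Fintype.card m) (v : m → ℝ) (hv : v ᵥ* M = 0) : v = 0 := by
  have hli : LinearIndependent ℝ M.row := by
    rw [linearIndependent_iff_card_eq_finrank_span, Set.finrank,
      ← Matrix.rank_eq_finrank_span_row, hM]
  exact Matrix.vecMul_injective_iff.mpr hli (by simpa using hv)

lemma exists_mulVec_eq {m n : Type*} [Fintype m] [Fintype n]
    (M : Matrix m n ℝ) (hM : ∀ v : m → ℝ, v ᵥ* M = 0 → v = 0) (b : m → ℝ) :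
    ∃ g, M *ᵥ g = b := by
  have hinj : Function.Injective M.vecMul := by
    intro v w hvw
    have := hM (v - w) (by rw [Matrix.sub_vecMul]; exact sub_eq_zero.mpr hvw)
    exact sub_eq_zero.mp this
  have hli : LinearIndependent ℝ M.row := Matrix.vecMul_injective_iff.mp hinj
  have hr : M.rank = Fintype.card m := hli.rank_matrix
  have htop : LinearMap.range M.mulVecLin = ⊤ := by
    apply Submodule.eq_top_of_finrank_eq
    rw [Module.finrank_fintype_fun_eq_card]
    exact hr
  exact LinearMap.range_eq_top.mp htop b

/-- The sequence `η_{L-1}, …, η_0, ξB, ξAB, ξA²B, …` of input coefficients of the shifted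
relations. -/
noncomputable def relCoeff {nx nu : ℕ} (L : ℕ) (A : Matrix (Fin nx) (Fin nx) ℝ)
    (B : Matrix (Fin nx) (Fin nu) ℝ) (ξ : Fin nx → ℝ) (η : ℕ → Fin nu → ℝ) (t : ℕ) :
    Fin nu → ℝ :=
  if t < L then η (L - 1 - t) else (ξ ᵥ* A ^ (t - L)) ᵥ* B

/-- A relation between `x_k`, `1` and `u_k, …, u_{k+L-1}`, shifted by `j` steps and rewritten in
terms of `x_k`; its constant term depends on `j` but not on `k`. -/
lemma shifted_relation {nx nu : ℕ} (L T : ℕ) (A : Matrix (Fin nx) (Fin nx) ℝ)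
    (B : Matrix (Fin nx) (Fin nu) ℝ) (b : Fin nx → ℝ) (x : ℕ → Fin nx → ℝ) (u : ℕ → Fin nu → ℝ)
    (hx : ∀ k, k + 1 < T → x (k + 1) = A *ᵥ x k + b + B *ᵥ u k)
    (ξ : Fin nx → ℝ) (c : ℝ) (η : ℕ → Fin nu → ℝ)
    (hrel : ∀ k < T, ξ ⬝ᵥ x k + c + ∑ m ∈ Finset.range L, η m ⬝ᵥ u (k + m) = 0) (j : ℕ) :
    ∀ k, k + j < T → (ξ ᵥ* A ^ j) ⬝ᵥ x k + (c + ∑ i ∈ Finset.range j, (ξ ᵥ* A ^ i) ⬝ᵥ b)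
      + ∑ l ∈ Finset.range (L + j), relCoeff L A B ξ η (L + j - 1 - l) ⬝ᵥ u (k + l) = 0 := by
  induction j with
  | zero =>
    intro k hk
    have := hrel k hk
    simp only [pow_zero, Matrix.vecMul_one, Finset.range_zero, Finset.sum_empty, add_zero]
    rw [← this]
    congr 1
    refine Finset.sum_congr rfl fun l hl => ?_
    have hl := Finset.mem_range.mp hl
    rw [relCoeff, if_pos (by omega), show L - 1 - (L - 1 - l) = l by omega]
  | succ j ih =>
    intro k hk
    have h1 := ih (k + 1) (by omega)
    rw [hx k (by omega), dotProduct_add, dotProduct_add, dotProduct_mulVec, dotProduct_mulVec,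
      vecMul_vecMul, ← pow_succ] at h1
    rw [← h1, Finset.sum_range_succ _ j, ← add_assoc L j 1, Finset.sum_range_succ']
    have h0 : relCoeff L A B ξ η (L + j + 1 - 1 - 0) = (ξ ᵥ* A ^ j) ᵥ* B := by
      rw [relCoeff, if_neg (by omega), show L + j + 1 - 1 - 0 - L = j by omega]
    rw [h0]
    have h2 : ∑ l ∈ Finset.range (L + j),
        relCoeff L A B ξ η (L + j + 1 - 1 - (l + 1)) ⬝ᵥ u (k + (l + 1))
        = ∑ l ∈ Finset.range (L + j), relCoeff L A B ξ η (L + j - 1 - l) ⬝ᵥ u (k + 1 + l) := by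
      refine Finset.sum_congr rfl fun l _ => ?_
      rw [show L + j + 1 - 1 - (l + 1) = L + j - 1 - l by omega,
        show k + (l + 1) = k + 1 + l by omega]
    rw [h2, add_zero]
    ring

/-- If a monic combination (weights `q 0, …, q n = 1`) of the shifted input relations vanishes at
`N + 1` consecutive times, up to constants, and the input is exciting of order `L + n + 1`, then
the coefficients `h` vanish. -/
lemma coeff_eq_zero {ι : Type*} [Fintype ι] (L n N : ℕ) (u : ℕ → ι → ℝ) (h : ℕ → ι → ℝ)
    (c q : ℕ → ℝ) (hq : q n = 1)
    (hrel : ∀ k ≤ N, ∑ j ∈ Finset.range (n + 1), q j *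
      (c j + ∑ l ∈ Finset.range (L + j), h (L + j - 1 - l) ⬝ᵥ u (k + l)) = 0)
    (hPE : ∀ v : ℕ → ι → ℝ,
      (∀ k < N, ∑ l ∈ Finset.range (L + n + 1), v l ⬝ᵥ u (k + l) = 0) →
      ∀ l < L + n + 1, v l = 0) :
    ∀ t < L + n, h t = 0 := by
  -- `w l` is the total coefficient of `u (k + l)`
  set w : ℕ → ι → ℝ := fun l =>
    ∑ j ∈ Finset.range (n + 1), q j • (if l < L + j then h (L + j - 1 - l) else 0) with hw
  have hwtop : w (L + n) = 0 := by
    rw [hw]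
    refine Finset.sum_eq_zero fun j hj => ?_
    have := Finset.mem_range.mp hj
    rw [if_neg (by omega), smul_zero]
  have hF : ∀ k ≤ N, (∑ j ∈ Finset.range (n + 1), q j * c j)
      + ∑ l ∈ Finset.range (L + n), w l ⬝ᵥ u (k + l) = 0 := by
    intro k hk
    rw [← hrel k hk]
    simp only [mul_add, Finset.sum_add_distrib, hw, sum_dotProduct]
    congr 1
    rw [Finset.sum_comm]
    refine Finset.sum_congr rfl fun j hj => ?_
    have hj := Finset.mem_range.mp hj
    rw [Finset.mul_sum]
    symm
    have hsub : Finset.range (L + j) ⊆ Finset.range (L + n) :=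
      Finset.range_subset_range.mpr (by omega)
    rw [← Finset.sum_subset hsub]
    · refine Finset.sum_congr rfl fun l hl => ?_
      rw [if_pos (Finset.mem_range.mp hl), smul_dotProduct, smul_eq_mul]
    · intro l _ hl
      rw [if_neg (by simpa using hl), smul_zero, zero_dotProduct]
  -- coefficients of the difference of the relations at times `k + 1` and `k`
  have hv := hPE (fun l => (if l = 0 then 0 else w (l - 1)) - w l) (by
    intro k hk
    have e1 := hF k hk.le
    have e2 := hF (k + 1) hk
    simp only [sub_dotProduct, Finset.sum_sub_distrib]
    rw [Finset.sum_range_succ', Finset.sum_range_succ _ (L + n), hwtop]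
    simp only [Nat.add_eq_zero_iff, one_ne_zero, and_false, if_false, if_true, zero_dotProduct,
      add_zero, Nat.add_sub_cancel]
    have e3 : ∑ l ∈ Finset.range (L + n), w l ⬝ᵥ u (k + (l + 1))
        = ∑ l ∈ Finset.range (L + n), w l ⬝ᵥ u (k + 1 + l) :=
      Finset.sum_congr rfl fun l _ => by rw [show k + (l + 1) = k + 1 + l by omega]
    rw [e3]
    linarith)
  have hw0 : ∀ l, l < L + n + 1 → w l = 0 := by
    intro l
    induction l with
    | zero => intro hl; simpa using hv 0 hl
    | succ l ih =>
      intro hl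
      have := hv (l + 1) hl
      simpa [ih (by omega)] using this
  intro t
  induction t using Nat.strong_induction_on with
  | _ t ih =>
    intro ht
    -- in `w (L + n - 1 - t)` the weight `q n = 1` multiplies `h t`, the others multiply earlier terms
    have e := hw0 (L + n - 1 - t) (by omega)
    rw [hw] at e
    simp only [Finset.sum_range_succ] at e
    rw [Finset.sum_eq_zero, hq, one_smul, zero_add, if_pos (by omega),
      show L + n - 1 - (L + n - 1 - t) = t by omega] at e
    · exact e
    · intro j hj
      have hj := Finset.mem_range.mp hj
      split_ifs with hlt
      · rw [ih _ (by omega) (by omega), smul_zero]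
      · exact smul_zero _

lemma exciting_of_rank {nu : ℕ} (u : ℕ → Fin nu → ℝ) (s N S : ℕ) (hs : s ≤ S)
    (hPE : (blockHankel u 0 S N).rank = S * nu) (v : ℕ → Fin nu → ℝ)
    (hv : ∀ k < N, ∑ l ∈ Finset.range s, v l ⬝ᵥ u (k + l) = 0) : ∀ l < s, v l = 0 := by
  have key := vecMul_eq_zero_of_rank (blockHankel u 0 S N) (by simpa using hPE)
    (fun p => if (p.1 : ℕ) < s then v p.1 p.2 else 0) (by
      ext k
      refine Eq.trans ?_ (hv k k.2)
      simp only [vecMul, dotProduct, blockHankel, of_apply, Fintype.sum_prod_type]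
      rw [Fin.sum_univ_eq_sum_range (fun a => ∑ i, (if a < s then v a i else 0)
        * u (0 + a + k) i) S]
      rw [← Finset.sum_subset (Finset.range_subset_range.mpr hs)]
      · refine Finset.sum_congr rfl fun l hl => Finset.sum_congr rfl fun i _ => ?_
        rw [if_pos (Finset.mem_range.mp hl), zero_add, add_comm l]
      · intro l _ hl
        refine Finset.sum_eq_zero fun i _ => ?_
        rw [if_neg (by simpa using hl), zero_mul])
  intro l hl
  ext i
  have := congrFun key (⟨l, by omega⟩, i)
  simpa [hl] using this

/-- Every linear relation between the state, the constant `1` and `L` consecutive inputs that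
holds along the data is trivial. -/
lemma relation_trivial {nx nu : ℕ} (L N T : ℕ) (hT : N + nx + 1 ≤ T)
    (A : Matrix (Fin nx) (Fin nx) ℝ)
    (B : Matrix (Fin nx) (Fin nu) ℝ) (b : Fin nx → ℝ) (x : ℕ → Fin nx → ℝ) (u : ℕ → Fin nu → ℝ)
    (hx : ∀ k, k + 1 < T → x (k + 1) = A *ᵥ x k + b + B *ᵥ u k)
    (hAB : (ctrbMat A B).rank = nx)
    (hPE : ∀ v : ℕ → Fin nu → ℝ,
      (∀ k < N, ∑ l ∈ Finset.range (L + nx + 1), v l ⬝ᵥ u (k + l) = 0) →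
      ∀ l < L + nx + 1, v l = 0)
    (ξ : Fin nx → ℝ) (c : ℝ) (η : ℕ → Fin nu → ℝ)
    (hrel : ∀ k < T, ξ ⬝ᵥ x k + c + ∑ m ∈ Finset.range L, η m ⬝ᵥ u (k + m) = 0) :
    ξ = 0 ∧ c = 0 ∧ ∀ m < L, η m = 0 := by
  have hdeg : A.charpoly.natDegree = nx := by simp
  have hmonic : A.charpoly.coeff nx = 1 := by
    have := A.charpoly_monic.coeff_natDegree
    rwa [hdeg] at this
  have hCH : ∑ j ∈ Finset.range (nx + 1), A.charpoly.coeff j • A ^ j = 0 := by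
    have := A.aeval_self_charpoly
    rwa [Polynomial.aeval_eq_sum_range, hdeg] at this
  have hh := coeff_eq_zero L nx N u (relCoeff L A B ξ η)
    (fun j => c + ∑ i ∈ Finset.range j, (ξ ᵥ* A ^ i) ⬝ᵥ b) A.charpoly.coeff hmonic (by
      intro k hk
      have hstate : ∑ j ∈ Finset.range (nx + 1),
          A.charpoly.coeff j * ((ξ ᵥ* A ^ j) ⬝ᵥ x k) = 0 := by
        have := congrArg (fun M => (ξ ᵥ* M) ⬝ᵥ x k) hCH
        simpa [vecMul_sum, sum_dotProduct, vecMul_smul, smul_dotProduct] using this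
      have hsum : ∑ j ∈ Finset.range (nx + 1), A.charpoly.coeff j *
          ((ξ ᵥ* A ^ j) ⬝ᵥ x k + (c + ∑ i ∈ Finset.range j, (ξ ᵥ* A ^ i) ⬝ᵥ b)
      + ∑ l ∈ Finset.range (L + j), relCoeff L A B ξ η (L + j - 1 - l) ⬝ᵥ u (k + l)) = 0 := by
        refine Finset.sum_eq_zero fun j hj => ?_
        have hj := Finset.mem_range.mp hj
        rw [shifted_relation L T A B b x u hx ξ c η hrel j k (by omega), mul_zero]
      simp only [add_assoc, mul_add _ ((ξ ᵥ* A ^ _) ⬝ᵥ x k), Finset.sum_add_distrib, hstate,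
        zero_add] at hsum
      simpa only [mul_add, Finset.sum_add_distrib, add_assoc] using hsum) hPE
  have hη : ∀ m < L, η m = 0 := by
    intro m hm
    have := hh (L - 1 - m) (by omega)
    rwa [relCoeff, if_pos (by omega), show L - 1 - (L - 1 - m) = m by omega] at this
  have hξ : ξ = 0 := by
    refine vecMul_eq_zero_of_rank (ctrbMat A B) (by simpa using hAB) ξ ?_
    ext p
    have := hh (L + p.1) (by omega)
    rw [relCoeff, if_neg (by omega), show L + (p.1 : ℕ) - L = p.1 by omega, vecMul_vecMul] at this
    exact congrFun this p.2
  refine ⟨hξ, ?_, hη⟩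
  have := hrel 0 (by omega)
  rw [hξ, zero_dotProduct, Finset.sum_eq_zero] at this
  · simpa using this
  · intro m hm
    rw [hη m (Finset.mem_range.mp hm), zero_dotProduct]

/-- If the data satisfy only the trivial relation, then any state, together with the constant `1` and
any `L` inputs, is a combination of the data. -/
lemma exists_combination {nx nu : ℕ} (L T : ℕ) (x : ℕ → Fin nx → ℝ) (u : ℕ → Fin nu → ℝ)
    (htriv : ∀ (ξ : Fin nx → ℝ) (c : ℝ) (η : ℕ → Fin nu → ℝ),
      (∀ k < T, ξ ⬝ᵥ x k + c + ∑ m ∈ Finset.range L, η m ⬝ᵥ u (k + m) = 0) →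
      ξ = 0 ∧ c = 0 ∧ ∀ m < L, η m = 0)
    (x0 : Fin nx → ℝ) (v : ℕ → Fin nu → ℝ) :
    ∃ g : Fin T → ℝ, ∑ k, g k • x k = x0 ∧ ∑ k, g k = 1 ∧
      ∀ a < L, ∑ k, g k • u (a + k) = v a := by
  let M : Matrix (Fin nx ⊕ Unit ⊕ (Fin L × Fin nu)) (Fin T) ℝ :=
    Matrix.of fun r k => Sum.elim (fun i => x k i)
      (Sum.elim (fun _ => 1) (fun p => u (p.1 + k) p.2)) r
  obtain ⟨g, hg⟩ := exists_mulVec_eq M (by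
    intro z hz
    have h := htriv (fun i => z (Sum.inl i)) (z (Sum.inr (Sum.inl ())))
      (fun m i => if hm : m < L then z (Sum.inr (Sum.inr (⟨m, hm⟩, i))) else 0) (by
        intro k hk
        have := congrFun hz ⟨k, hk⟩
        simp only [vecMul, dotProduct, M, of_apply, Fintype.sum_sum_type, Sum.elim_inl,
          Sum.elim_inr, Fintype.sum_prod_type, Finset.univ_unique, Finset.sum_singleton,
          Pi.zero_apply, mul_one] at this
        refine Eq.trans ?_ this
        rw [← add_assoc, ← Fin.sum_univ_eq_sum_range (fun m =>
          (fun i => if hm : m < L then z (Sum.inr (Sum.inr (⟨m, hm⟩, i))) else 0) ⬝ᵥ u (k + m)) L]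
        congr 1
        refine Finset.sum_congr rfl fun m _ => ?_
        simp [dotProduct, add_comm k])
    ext r
    rcases r with i | _ | ⟨m, i⟩
    · exact congrFun h.1 i
    · exact h.2.1
    · simpa using congrFun (h.2.2 m m.2) i)
    (Sum.elim x0 (Sum.elim (fun _ => 1) (fun p => v p.1 p.2)))
  refine ⟨g, ?_, ?_, ?_⟩
  · ext i
    have := congrFun hg (Sum.inl i)
    simpa [M, mulVec, dotProduct, mul_comm] using this
  · have := congrFun hg (Sum.inr (Sum.inl ()))
    simpa [M, mulVec, dotProduct] using this
  · intro a ha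
    ext i
    have := congrFun hg (Sum.inr (Sum.inr (⟨a, ha⟩, i)))
    simpa [M, mulVec, dotProduct, mul_comm] using this

/-- Combinations with weights summing to one commute with affine maps. -/
lemma affine_combination {T n p m : ℕ} (g : Fin T → ℝ) (hg : ∑ k, g k = 1)
    (A : Matrix (Fin m) (Fin n) ℝ) (B : Matrix (Fin m) (Fin p) ℝ) (b : Fin m → ℝ)
    (x : Fin T → Fin n → ℝ) (u : Fin T → Fin p → ℝ) :
    ∑ k, g k • (A *ᵥ x k + b + B *ᵥ u k)
      = A *ᵥ (∑ k, g k • x k) + b + B *ᵥ (∑ k, g k • u k) := by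
  simp only [smul_add, Finset.sum_add_distrib, ← Finset.sum_smul, hg, one_smul, mulVec_sum,
    mulVec_smul]

/-- **Corollary 1 (fundamental lemma for a constant disturbance).** For the
system `x_{k+1} = A x_k + B_d d + B u_k`, `y_k = C x_k + C_d d + D u_k` with a
fixed nonzero constant disturbance `d`: if `(A, B)` is controllable and the
measured input over time steps `0, ..., N + L + n̄ - 2` (with `n̄ = n_x + n_d`)
is persistently exciting of order `L + n̄`, then every `L`-long input-output
trajectory of the system (with the same disturbance `d`) is a linear
combination `g` of the columns of the stacked input/output block-Hankel data
matrix. -/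
theorem fundamental_lemma_constant_disturbance
    (nx nd nu ny N L : ℕ)
    (A : Matrix (Fin nx) (Fin nx) ℝ) (Bd : Matrix (Fin nx) (Fin nd) ℝ)
    (B : Matrix (Fin nx) (Fin nu) ℝ)
    (C : Matrix (Fin ny) (Fin nx) ℝ) (Cd : Matrix (Fin ny) (Fin nd) ℝ)
    (D : Matrix (Fin ny) (Fin nu) ℝ)
    (d : Fin nd → ℝ) (hd : d ≠ 0)
    (um : ℕ → Fin nu → ℝ) (xm : ℕ → Fin nx → ℝ) (ym : ℕ → Fin ny → ℝ)
    (htraj_x : ∀ k, k + 3 ≤ N + L + (nx + nd) →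
      xm (k + 1) = A *ᵥ xm k + Bd *ᵥ d + B *ᵥ um k)
    (htraj_y : ∀ k, k + 2 ≤ N + L + (nx + nd) →
      ym k = C *ᵥ xm k + Cd *ᵥ d + D *ᵥ um k)
    (hAB : (ctrbMat A B).rank = nx)
    (hPE : (blockHankel um 0 (L + (nx + nd)) N).rank = (L + (nx + nd)) * nu) :
    ∀ (u : ℕ → Fin nu → ℝ) (y : ℕ → Fin ny → ℝ),
      (∃ x : ℕ → Fin nx → ℝ,
        (∀ k, k + 1 < L → x (k + 1) = A *ᵥ x k + Bd *ᵥ d + B *ᵥ u k) ∧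
        (∀ k, k < L → y k = C *ᵥ x k + Cd *ᵥ d + D *ᵥ u k)) →
      ∃ g : Fin (N + (nx + nd)) → ℝ,
        (fromRows (blockHankel um 0 L (N + (nx + nd)))
                  (blockHankel ym 0 L (N + (nx + nd)))) *ᵥ g
          = Sum.elim (fun p : Fin L × Fin nu => u (p.1 : ℕ) p.2)
                     (fun p : Fin L × Fin ny => y (p.1 : ℕ) p.2) := by
  rintro u y ⟨x, hx, hy⟩
  have hnd : 0 < nd := by
    rcases Nat.eq_zero_or_pos nd with h | h
    · subst h
      exact absurd (Subsingleton.elim d 0) hd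
    · exact h
  rcases Nat.eq_zero_or_pos L with hL | hL
  · subst hL
    refine ⟨0, ?_⟩
    ext r
    rcases r with p | p <;> exact p.1.elim0
  obtain ⟨g, hgx, hg1, hgu⟩ := exists_combination L (N + (nx + nd)) xm um
    (relation_trivial L N (N + (nx + nd)) (by omega) A B (Bd *ᵥ d) xm um
      (fun k hk => htraj_x k (by omega)) hAB
      (exciting_of_rank um (L + nx + 1) N (L + (nx + nd)) (by omega) hPE)) (x 0) u
  have hX : ∀ a, a < L → ∑ k : Fin (N + (nx + nd)), g k • xm (a + k) = x a := by
    intro a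
    induction a with
    | zero => intro _; simpa using hgx
    | succ a ih =>
      intro ha
      rw [hx a ha, ← ih (by omega), ← hgu a (by omega), ← affine_combination g hg1]
      refine Finset.sum_congr rfl fun k _ => ?_
      rw [show a + 1 + (k : ℕ) = a + k + 1 by omega, htraj_x (a + k) (by omega)]
  have hY : ∀ a, a < L → ∑ k : Fin (N + (nx + nd)), g k • ym (a + k) = y a := by
    intro a ha
    rw [hy a ha, ← hX a ha, ← hgu a ha, ← affine_combination g hg1]
    refine Finset.sum_congr rfl fun k _ => ?_
    rw [htraj_y (a + k) (by omega)]
  refine ⟨g, ?_⟩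
  ext r
  rcases r with ⟨a, i⟩ | ⟨a, i⟩
  · have := congrFun (hgu a a.2) i
    simpa [mulVec, dotProduct, blockHankel, mul_comm] using this
  · have := congrFun (hY a a.2) i
    simpa [mulVec, dotProduct, blockHankel, mul_comm] using this
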